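/- Let p be a binary word of length l with at most 3 runs. If p is alternating (all runs of size 1), then p does not have an internal zero at any n ≥ 7. If p is not alternating, then for every n ≥ l + 3, B_{n,p}(M_{n,p} − 1) = 0; in particular, p has an internal zero at every n ≥ l + 3. -/

import Mathlib

/-- `occ p w` is the number of occurrences of `p` as a subsequence of `w`,
i.e. the number of choices of indices `i₁ < ⋯ < i_l` in `w` matching `p`. -/
def occ (p w : List Bool) : ℕ := w.sublists.count p

/-- `B n p k` is the number of binary words of length `n` with exactly `k` occurrences of `p`. -/
noncomputable def B (n : ℕ) (p : List Bool) (k : ℕ) : ℕ :=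
  Nat.card {w : List Bool // w.length = n ∧ occ p w = k}

/-- The list of runs (maximal blocks of consecutive equal letters) of a binary word. -/
def runs (p : List Bool) : List (List Bool) := p.splitBy (· == ·)

/-- The number of runs of a binary word. -/
def numRuns (p : List Bool) : ℕ := (runs p).length

/-- The number of runs of size `i` of a binary word. -/
def numRunsOfSize (p : List Bool) (i : ℕ) : ℕ := ((runs p).map List.length).count i

/-- `maxOcc n p` is the maximum number of occurrences of `p` among binary words of length `n`. -/
noncomputable def maxOcc (n : ℕ) (p : List Bool) : ℕ :=
  sSup {k | ∃ w : List Bool, w.length = n ∧ occ p w = k}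

/-- `p` has an internal zero at `n` if the sequence `(B n p k)_{k ≥ 0}` has an internal zero. -/
def HasInternalZeroAt (p : List Bool) (n : ℕ) : Prop :=
  ∃ k₁ k₂ k₃ : ℕ, k₁ < k₂ ∧ k₂ < k₃ ∧ B n p k₁ ≠ 0 ∧ B n p k₂ = 0 ∧ B n p k₃ ≠ 0

/-!
A word with at most three runs is a block word `aʳ bˢ aᵗ`. Record a text `w` by its number of
letters `a` and by the sorted list of numbers of letters `a` preceding each letter `b`. An
occurrence of `aʳ bˢ aᵗ` chooses `s` entries of that list, and the number of ways to complete the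
choice depends only on its first and last entry. Hence a block text maximises the number of
occurrences, and the maximum is the maximum of `x.choose r * y.choose s * z.choose t` over `x + y
+ z = n`.

In the non-alternating case a text with one occurrence less than the maximum falls into one of
three situations, depending on its number `y` of letters `b`. If `1 < s < y`, the sum over the
choices cannot fall short by exactly one: the defective choice whose ends are the first and the
last letter `b` forces two optimal ones whose ends recombine to a choice of weight above the
optimum. If `s = y`, or `s = 1`, the defect is that of a single product of binomial coefficients.
Log-concavity reduces this to two products that differ by moving one unit between two coordinates,
and Pascal's rule turns a difference of one into a Bézout identity with only tiny solutions, which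
the balance conditions at an optimum exclude.

For `aba` a letter `b` with `u` letters `a` on the left and `v` on the right contributes `u * v`,
so the attained values are sums of such products. Lagrange's four-square theorem realises every
value within a constant proportion of the maximum, smaller values come from shorter texts, and
short texts are checked directly.
-/

section Choose

lemma choose_pos_iff {n k : ℕ} : 0 < n.choose k ↔ k ≤ n :=
  Nat.pos_iff_ne_zero.trans Nat.choose_ne_zero_iff

lemma le_choose_of_lt {n k : ℕ} (hk : 0 < k) (hkn : k < n) : n ≤ n.choose k := by
  induction n generalizing k with
  | zero => omega
  | succ n ih =>
    obtain ⟨k, rfl⟩ := Nat.exists_eq_add_of_le' hk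
    rw [Nat.choose_succ_succ']
    have hpos := Nat.choose_pos (show k ≤ n by omega)
    rcases (Nat.succ_le_of_lt hkn).eq_or_lt with h | h
    · obtain rfl : n = k + 1 := by omega
      simp [Nat.choose_succ_self_right]
    · have := ih (k := k + 1) (by omega) (by omega)
      omega

lemma choose_mul_choose_le_choose_succ_mul_choose_pred (r : ℕ) {x y : ℕ} (hxy : x < y) :
    x.choose r * y.choose r ≤ (x + 1).choose r * (y - 1).choose r := by
  obtain ⟨d, rfl⟩ := Nat.exists_eq_add_of_lt hxy
  rw [Nat.add_sub_cancel]
  rcases lt_or_ge x r with hx | hx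
  · simp [Nat.choose_eq_zero_of_lt hx]
  refine Nat.le_of_mul_le_mul_right (c := (x + 1) * (x + d + 1 - r)) ?_
    (Nat.mul_pos (by omega) (by omega))
  have hratio : (x + 1 - r) * (x + d + 1) ≤ (x + 1) * (x + d + 1 - r) := by
    obtain ⟨e, rfl⟩ := Nat.exists_eq_add_of_le hx
    rw [show r + e + 1 - r = e + 1 by omega, show r + e + d + 1 - r = e + d + 1 by omega]
    nlinarith [Nat.zero_le (r * d)]
  calc x.choose r * (x + d + 1).choose r * ((x + 1) * (x + d + 1 - r))
      = (x.choose r * (x + 1)) * ((x + d + 1).choose r * (x + d + 1 - r)) := by ring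
    _ = (x + 1).choose r * (x + d).choose r * ((x + 1 - r) * (x + d + 1)) := by
      rw [Nat.choose_mul_succ_eq x, ← Nat.choose_mul_succ_eq (x + d)]; ring
    _ ≤ _ := Nat.mul_le_mul_left _ hratio

lemma choose_eq_succ_of_dvd {n k : ℕ} (hk : k < n) (hdvd : n.choose k ∣ k + 1) :
    n.choose k = k + 1 ∧ n.choose (k + 1) = n - k ∧ (k = 0 ∨ n = k + 1) := by
  rcases Nat.eq_zero_or_pos k with rfl | hpos
  · simp
  · have hle : n ≤ k + 1 := (le_choose_of_lt hpos hk).trans (Nat.le_of_dvd k.succ_pos hdvd)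
    obtain rfl : n = k + 1 := by omega
    simp [Nat.choose_succ_self_right]

lemma eq_zero_of_choose_succ_mul_choose_add_one_eq {r t x u : ℕ} (hx : r < x) (hu : t < u)
    (hsum : r + t + 3 ≤ x + u)
    (h : x.choose (r + 1) * u.choose t + 1 = x.choose r * u.choose (t + 1)) :
    r = 0 ∧ t = 0 := by
  -- The equation is a Bézout identity for two pairs of consecutive binomial coefficients.
  have hint : (x.choose (r + 1) * u.choose t + 1 : ℤ) = x.choose r * u.choose (t + 1) :=
    mod_cast h
  have hcop₁ : (x.choose r).Coprime (x.choose (r + 1)) :=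
    Nat.isCoprime_iff_coprime.1 ⟨u.choose (t + 1), -u.choose t, by linarith⟩
  have hcop₂ : (u.choose t).Coprime (u.choose (t + 1)) :=
    Nat.isCoprime_iff_coprime.1 ⟨-x.choose (r + 1), x.choose r, by linarith⟩
  obtain ⟨hA, hA', hr⟩ := choose_eq_succ_of_dvd hx <| hcop₁.dvd_of_dvd_mul_left <|
    (Nat.choose_succ_right_eq x r) ▸ Dvd.intro _ rfl
  obtain ⟨hC, hC', ht⟩ := choose_eq_succ_of_dvd hu <| hcop₂.dvd_of_dvd_mul_left <|
    (Nat.choose_succ_right_eq u t) ▸ Dvd.intro _ rfl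
  rw [hA, hA', hC, hC'] at h
  have hr₀ : r = 0 := by
    rcases hr with rfl | rfl
    · rfl
    obtain rfl : t = 0 := by omega
    rw [Nat.add_sub_cancel_left, Nat.sub_zero] at h
    have := Nat.mul_le_mul_left (r + 1) (show 2 ≤ u by omega)
    linarith
  subst hr₀
  refine ⟨rfl, ht.resolve_right ?_⟩
  rintro rfl
  rw [Nat.add_sub_cancel_left, Nat.sub_zero, zero_add, one_mul] at h
  exact (Nat.mul_pos hx t.succ_pos).ne' (by linarith)

lemma eq_one_and_le_one_of_choose_mul_choose_succ {r t x u : ℕ} (hx : r ≤ x) (hu : t ≤ u)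
    (hsum : r + t + 1 ≤ x + u)
    (h : x.choose r * (u + 1).choose t + 1 = (x + 1).choose r * u.choose t) :
    r = 1 ∧ t ≤ 1 := by
  rcases r with _ | r
  · have : u.choose t ≤ (u + 1).choose t := Nat.choose_le_choose t u.le_succ
    simp only [Nat.choose_zero_right, one_mul] at h
    omega
  rw [Nat.choose_succ_succ' x] at h
  rcases t with _ | t
  · simp only [Nat.choose_zero_right, mul_one] at h
    have := Nat.choose_eq_one_iff.1 (show x.choose r = 1 by omega)
    omega
  rw [Nat.choose_succ_succ' u] at h
  obtain ⟨rfl, rfl⟩ := eq_zero_of_choose_succ_mul_choose_add_one_eq (r := r) (t := t) hx hu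
    (by omega) (by linarith)
  exact ⟨rfl, le_rfl⟩

end Choose

section ChooseProd

variable {ι : Type*}

/-- `moveUnit v j i` transfers one unit of the vector `v` from coordinate `j` to coordinate `i`.
It is meant for `i ≠ j` and `v j ≠ 0`, since the subtraction truncates. -/
def moveUnit [DecidableEq ι] (v : ι → ℕ) (j i : ι) : ι → ℕ :=
  Function.update (Function.update v j (v j - 1)) i (v i + 1)

lemma moveUnit_target [DecidableEq ι] (v : ι → ℕ) (j i : ι) : moveUnit v j i i = v i + 1 := by
  simp [moveUnit]

lemma moveUnit_source [DecidableEq ι] (v : ι → ℕ) {i j : ι} (hij : i ≠ j) :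
    moveUnit v j i j = v j - 1 := by
  simp [moveUnit, hij.symm]

variable [Fintype ι]

/-- The product of the binomial coefficients `v i` choose `r i`. It counts the occurrences of a word
with run sizes `r` in a word with run sizes `v`, when both words have equally many runs and start
with the same letter. -/
def chooseProd (r v : ι → ℕ) : ℕ := ∏ i, (v i).choose (r i)

/-- `v` maximises `chooseProd r` among the vectors with the same coordinate sum. -/
def IsOptimal (r v : ι → ℕ) : Prop :=
  ∀ u : ι → ℕ, ∑ i, u i = ∑ i, v i → chooseProd r u ≤ chooseProd r v

lemma exists_isOptimal [Nonempty ι] (r : ι → ℕ) (n : ℕ) :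
    ∃ v : ι → ℕ, ∑ i, v i = n ∧ IsOptimal r v := by
  classical
  have hmem {v : ι → ℕ} : v ∈ Finset.piAntidiag Finset.univ n ↔ ∑ i, v i = n := by simp
  have hne : (Finset.piAntidiag (Finset.univ : Finset ι) n).Nonempty :=
    ⟨Pi.single (Classical.arbitrary ι) n, hmem.2 (by simp)⟩
  obtain ⟨v, hv, hmax⟩ := Finset.exists_max_image _ (chooseProd r) hne
  exact ⟨v, hmem.1 hv, fun u hu => hmax u (hmem.2 (hu.trans (hmem.1 hv)))⟩

lemma le_of_chooseProd_pos {r v : ι → ℕ} (h : 0 < chooseProd r v) (i : ι) : r i ≤ v i :=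
  choose_pos_iff.1 (Nat.pos_of_ne_zero (Finset.prod_ne_zero_iff.1 h.ne' i (Finset.mem_univ i)))

lemma IsOptimal.of_chooseProd_eq {r v u : ι → ℕ} (hv : IsOptimal r v)
    (hsum : ∑ i, u i = ∑ i, v i) (heq : chooseProd r u = chooseProd r v) : IsOptimal r u :=
  fun w hw => heq ▸ hv w (hw.trans hsum)

section MoveUnit

variable [DecidableEq ι]

lemma moveUnit_of_mem_compl (v : ι → ℕ) {i j k : ι} (hk : k ∈ ({i, j} : Finset ι)ᶜ) :
    moveUnit v j i k = v k := by
  simp only [Finset.mem_compl, Finset.mem_insert, Finset.mem_singleton, not_or] at hk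
  simp [moveUnit, hk.1, hk.2]

lemma sum_eq_add_sum_compl_pair (v : ι → ℕ) {i j : ι} (hij : i ≠ j) :
    ∑ k, v k = v i + v j + ∑ k ∈ ({i, j} : Finset ι)ᶜ, v k := by
  rw [← Finset.sum_add_sum_compl {i, j}, Finset.sum_pair hij]

lemma chooseProd_eq_mul_prod_compl_pair (r v : ι → ℕ) {i j : ι} (hij : i ≠ j) :
    chooseProd r v = (v i).choose (r i) * (v j).choose (r j) *
      ∏ k ∈ ({i, j} : Finset ι)ᶜ, (v k).choose (r k) := by
  rw [chooseProd, ← Finset.prod_mul_prod_compl {i, j}, Finset.prod_pair hij]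

lemma sum_moveUnit (v : ι → ℕ) {i j : ι} (hij : i ≠ j) (hj : 0 < v j) :
    ∑ k, moveUnit v j i k = ∑ k, v k := by
  rw [sum_eq_add_sum_compl_pair _ hij, sum_eq_add_sum_compl_pair v hij, moveUnit_target,
    moveUnit_source v hij, Finset.sum_congr rfl fun k hk => moveUnit_of_mem_compl v hk]
  omega

lemma chooseProd_moveUnit (r v : ι → ℕ) {i j : ι} (hij : i ≠ j) :
    chooseProd r (moveUnit v j i) = (v i + 1).choose (r i) * (v j - 1).choose (r j) *
      ∏ k ∈ ({i, j} : Finset ι)ᶜ, (v k).choose (r k) := by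
  rw [chooseProd_eq_mul_prod_compl_pair _ _ hij, moveUnit_target, moveUnit_source v hij,
    Finset.prod_congr rfl fun k hk => by rw [moveUnit_of_mem_compl v hk]]

lemma chooseProd_mul_le_moveUnit_mul (r : ι → ℕ) {v v' : ι → ℕ} {i j : ι} (hi : v i < v' i)
    (hj : v' j < v j) :
    chooseProd r v * chooseProd r v' ≤
      chooseProd r (moveUnit v j i) * chooseProd r (moveUnit v' i j) := by
  have hij : i ≠ j := by rintro rfl; omega
  rw [chooseProd_eq_mul_prod_compl_pair r v hij, chooseProd_eq_mul_prod_compl_pair r v' hij.symm,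
    chooseProd_moveUnit r v hij, chooseProd_moveUnit r v' hij.symm, Finset.pair_comm j i]
  have hi' := choose_mul_choose_le_choose_succ_mul_choose_pred (r i) hi
  have hj' := choose_mul_choose_le_choose_succ_mul_choose_pred (r j) hj
  calc _ = (v i).choose (r i) * (v' i).choose (r i) * ((v' j).choose (r j) * (v j).choose (r j)) *
        ((∏ k ∈ ({i, j} : Finset ι)ᶜ, (v k).choose (r k)) *
          ∏ k ∈ ({i, j} : Finset ι)ᶜ, (v' k).choose (r k)) := by ring
    _ ≤ _ := Nat.mul_le_mul_right _ (Nat.mul_le_mul hi' hj')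
    _ = _ := by ring

end MoveUnit

lemma IsOptimal.mul_le_mul_succ {r v : ι → ℕ} (hv : IsOptimal r v) (hpos : 0 < chooseProd r v)
    (i j : ι) : r i * v j ≤ r j * (v i + 1) := by
  classical
  rcases eq_or_ne i j with rfl | hij
  · exact Nat.mul_le_mul_left _ (Nat.le_succ _)
  rcases Nat.eq_zero_or_pos (v j) with hj | hj
  · simp [hj]
  have hmove := hv _ (sum_moveUnit v hij hj)
  rw [chooseProd_eq_mul_prod_compl_pair r v hij] at hpos
  rw [chooseProd_moveUnit r v hij, chooseProd_eq_mul_prod_compl_pair r v hij] at hmove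
  replace hmove := Nat.le_of_mul_le_mul_right hmove (Nat.pos_of_mul_pos_left hpos)
  replace hpos := Nat.pos_of_mul_pos_right hpos
  have hri : r i ≤ v i := choose_pos_iff.1 (Nat.pos_of_mul_pos_right hpos)
  have hrj : r j ≤ v j := choose_pos_iff.1 (Nat.pos_of_mul_pos_left hpos)
  have hi := Nat.choose_mul_succ_eq (v i) (r i)
  have hj' := Nat.choose_mul_succ_eq (v j - 1) (r j)
  rw [Nat.sub_add_cancel hj] at hj'
  have hratio : (v i + 1) * (v j - r j) ≤ (v i + 1 - r i) * v j := by
    refine Nat.le_of_mul_le_mul_left ?_ hpos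
    calc (v i).choose (r i) * (v j).choose (r j) * ((v i + 1) * (v j - r j))
        = ((v i).choose (r i) * (v i + 1)) * ((v j).choose (r j) * (v j - r j)) := by ring
      _ = (v i + 1).choose (r i) * (v j - 1).choose (r j) * ((v i + 1 - r i) * v j) := by
        rw [hi, ← hj']; ring
      _ ≤ _ := Nat.mul_le_mul_right _ hmove
  obtain ⟨b, hb⟩ := Nat.exists_eq_add_of_le hrj
  obtain ⟨c, hc⟩ := Nat.exists_eq_add_of_le hri
  rw [hb, hc] at hratio ⊢
  rw [show r j + b - r j = b by omega, show r i + c + 1 - r i = c + 1 by omega] at hratio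
  nlinarith

lemma IsOptimal.choose_le {r v : ι → ℕ} (hv : IsOptimal r v) (hsum : ∑ i, r i ≤ ∑ i, v i)
    (i : ι) : (r i + (∑ k, v k - ∑ k, r k)).choose (r i) ≤ chooseProd r v := by
  classical
  set d := ∑ k, v k - ∑ k, r k
  have hu : ∑ k, (r + Pi.single i d : ι → ℕ) k = ∑ k, v k := by
    simp only [Pi.add_apply, Finset.sum_add_distrib, Finset.sum_pi_single', Finset.mem_univ,
      if_true]
    omega
  convert hv _ hu using 1
  rw [chooseProd, Finset.prod_eq_single i (fun k _ hk => by simp [hk]) (by simp)]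
  simp

lemma IsOptimal.two_le_chooseProd {r v : ι → ℕ} (hv : IsOptimal r v) (hr : ∃ k, 2 ≤ r k)
    (hsum : ∑ k, r k + 2 ≤ ∑ k, v k) : 2 ≤ chooseProd r v := by
  obtain ⟨k, hk⟩ := hr
  have := hv.choose_le (by omega) k
  have := le_choose_of_lt (n := r k + (∑ i, v i - ∑ i, r i)) (k := r k) (by omega) (by omega)
  omega

lemma IsOptimal.exists_moveUnit_eq [DecidableEq ι] {r v v' : ι → ℕ} (hv' : IsOptimal r v')
    (hsum : ∑ i, v i = ∑ i, v' i) (hgap : chooseProd r v + 1 = chooseProd r v')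
    (hpos : 0 < chooseProd r v) :
    ∃ i j, i ≠ j ∧ 0 < v j ∧ chooseProd r (moveUnit v j i) = chooseProd r v' := by
  induction hd : ∑ k, (v k - v' k) using Nat.strong_induction_on generalizing v' with
  | _ d ih =>
  obtain ⟨i, hi⟩ : ∃ i, v i < v' i := by
    by_contra! h
    have := (Finset.sum_eq_sum_iff_of_le fun k _ => h k).1 hsum.symm
    simp [show v = v' from funext fun k => (this k (Finset.mem_univ k)).symm] at hgap
  obtain ⟨j, hj⟩ : ∃ j, v' j < v j := by
    by_contra! h
    exact (Finset.sum_lt_sum (fun k _ => h k) ⟨i, Finset.mem_univ i, hi⟩).ne hsum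
  have hij : i ≠ j := by rintro rfl; omega
  by_cases hadj : chooseProd r (moveUnit v j i) = chooseProd r v'
  · exact ⟨i, j, hij, by omega, hadj⟩
  have hsum₁ := sum_moveUnit v hij (by omega)
  have hsum₂ := sum_moveUnit v' hij.symm (by omega)
  have hle₁ := hv' _ (hsum₁.trans hsum)
  have hle₂ := hv' _ hsum₂
  have hopt : chooseProd r (moveUnit v' i j) = chooseProd r v' := by
    have := chooseProd_mul_le_moveUnit_mul r hi hj
    refine hle₂.antisymm (Nat.le_of_mul_le_mul_left ?_ hpos)
    exact this.trans (Nat.mul_le_mul_right _ (by omega))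
  rw [← hopt]
  refine ih _ ?_ (hv'.of_chooseProd_eq hsum₂ hopt) (hsum.trans hsum₂.symm) (by rw [hopt, hgap]) rfl
  rw [← hd]
  refine Finset.sum_lt_sum (fun k _ => ?_) ⟨j, Finset.mem_univ j, ?_⟩
  · rcases eq_or_ne k i with rfl | hki
    · rw [moveUnit_source v' hij.symm]; omega
    · rcases eq_or_ne k j with rfl | hkj
      · rw [moveUnit_target]; omega
      · rw [moveUnit_of_mem_compl v' (by simp [hki, hkj])]
  · rw [moveUnit_target]; omega

lemma IsOptimal.chooseProd_add_one_ne_moveUnit [DecidableEq ι] {r v : ι → ℕ} {i j : ι}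
    (hij : i ≠ j) (hj : 0 < v j) (hopt : IsOptimal r (moveUnit v j i)) (hpos : 0 < chooseProd r v)
    (hr : ∃ k, 2 ≤ r k) (hsum : ∑ k, r k + 2 ≤ ∑ k, v k) :
    chooseProd r v + 1 ≠ chooseProd r (moveUnit v j i) := by
  intro hgap
  obtain ⟨m, hm⟩ := hr
  have hpos' : 0 < chooseProd r (moveUnit v j i) := by omega
  have hi : r i ≤ v i := le_of_chooseProd_pos hpos i
  have hj' : r j ≤ v j - 1 := moveUnit_source v hij ▸ le_of_chooseProd_pos hpos' j
  rw [chooseProd_moveUnit r v hij, chooseProd_eq_mul_prod_compl_pair r v hij] at hgap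
  have hprod : ∏ k ∈ ({i, j} : Finset ι)ᶜ, (v k).choose (r k) = 1 :=
    Nat.dvd_one.1 ((Nat.dvd_add_right (Dvd.intro_left _ rfl)).1 (hgap ▸ Dvd.intro_left _ rfl))
  have htight : ∀ k ∈ ({i, j} : Finset ι)ᶜ, v k = r k := fun k hk => by
    rcases Nat.choose_eq_one_iff.1 (Finset.prod_eq_one_iff.1 hprod k hk) with h | h
    · have := hopt.mul_le_mul_succ hpos' m k
      rw [h, zero_mul, moveUnit_of_mem_compl v hk] at this
      rw [h]
      exact (Nat.mul_eq_zero.1 (Nat.le_zero.1 this)).resolve_left (by omega)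
    · exact h
  have hcompl : ∑ k ∈ ({i, j} : Finset ι)ᶜ, v k = ∑ k ∈ ({i, j} : Finset ι)ᶜ, r k :=
    Finset.sum_congr rfl htight
  rw [sum_eq_add_sum_compl_pair r hij, sum_eq_add_sum_compl_pair v hij, hcompl] at hsum
  rw [hprod, mul_one, mul_one] at hgap
  obtain ⟨hri, hrj⟩ := eq_one_and_le_one_of_choose_mul_choose_succ (u := v j - 1) hi hj' (by omega)
    (by rwa [Nat.sub_add_cancel hj])
  have hmij : m ∈ ({i, j} : Finset ι)ᶜ := by
    simp only [Finset.mem_compl, Finset.mem_insert, Finset.mem_singleton, not_or]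
    constructor <;> rintro rfl <;> omega
  have hbal := hopt.mul_le_mul_succ hpos' m i
  rw [moveUnit_target, moveUnit_of_mem_compl v hmij, htight m hmij, hri] at hbal
  nlinarith

lemma IsOptimal.chooseProd_add_one_ne {r v v' : ι → ℕ} (hv' : IsOptimal r v')
    (hr : ∃ k, 2 ≤ r k) (hsum : ∑ k, r k + 2 ≤ ∑ k, v' k) (hvv' : ∑ k, v k = ∑ k, v' k) :
    chooseProd r v + 1 ≠ chooseProd r v' := by
  classical
  intro hgap
  have hpos : 0 < chooseProd r v := by
    have := hv'.two_le_chooseProd hr hsum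
    omega
  obtain ⟨i, j, hij, hj, hmove⟩ := hv'.exists_moveUnit_eq hvv' hgap hpos
  have hopt := hv'.of_chooseProd_eq ((sum_moveUnit v hij hj).trans hvv') hmove
  exact hopt.chooseProd_add_one_ne_moveUnit hij hj hpos hr (hvv' ▸ hsum) (hmove ▸ hgap)

end ChooseProd

section EndWeight

/-- The weight `A x₁ * D xₛ` of a list `x₁, …, xₛ`, which depends only on its two ends. The empty
list gets the junk weight `A 0 * D 0`. -/
def endWeight (A D : ℕ → ℕ) (q : List ℕ) : ℕ := A (q.headD 0) * D (q.getLastD 0)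

/-- The sum of `endWeight A D` over the sublists of length `s`. -/
def endWeightSum (A D : ℕ → ℕ) (s : ℕ) (L : List ℕ) : ℕ :=
  ((L.sublistsLen s).map (endWeight A D)).sum

lemma endWeight_cons (A D : ℕ → ℕ) (x : ℕ) (q : List ℕ) :
    endWeight A D (x :: q) = A x * D (q.getLastD x) := by
  rw [endWeight, List.headD_cons, List.getLastD_cons]

lemma endWeightSum_one (A D : ℕ → ℕ) (L : List ℕ) :
    endWeightSum A D 1 L = (L.map fun x => A x * D x).sum := by
  simp [endWeightSum, endWeight, List.sublistsLen_one, Function.comp_def]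

lemma endWeightSum_succ_cons (A D : ℕ → ℕ) (s x : ℕ) (L : List ℕ) :
    endWeightSum A D (s + 1) (x :: L) =
      endWeightSum A D (s + 1) L +
        ((L.sublistsLen s).map (endWeight A D ∘ List.cons x)).sum := by
  simp [endWeightSum, List.sublistsLen_succ_cons]

lemma sum_lt_length_mul {l : List ℕ} {G y : ℕ} (h : ∀ x ∈ l, x ≤ G) (hy : y ∈ l) (hyG : y < G) :
    l.sum < l.length * G := by
  have := List.sum_lt_sum (l := l) id (fun _ => G) h ⟨y, hy, hyG⟩
  simpa using this

lemma sum_add_one_ne_length_mul {l : List ℕ} {G : ℕ} (h : ∀ x ∈ l, x ≤ G)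
    (h' : ∀ x ∈ l, x + 1 ≠ G) : l.sum + 1 ≠ l.length * G := by
  suffices l.sum = l.length * G ∨ l.sum + 2 ≤ l.length * G by omega
  induction l with
  | nil => simp
  | cons x l ih =>
    have hx := h x List.mem_cons_self
    have hx' := h' x List.mem_cons_self
    have := ih (fun y hy => h y (List.mem_cons_of_mem x hy))
      fun y hy => h' y (List.mem_cons_of_mem x hy)
    rw [List.sum_cons, List.length_cons, Nat.succ_mul]
    omega

variable {A D : ℕ → ℕ} {G : ℕ} {L : List ℕ}

lemma endWeight_le (hA : Monotone A) (hG : ∀ x ∈ L, A x * D x ≤ G) (hL : L.Pairwise (· ≤ ·))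
    (hne : L ≠ []) : endWeight A D L ≤ G := by
  obtain ⟨x, q, rfl⟩ := List.exists_cons_of_ne_nil hne
  have hmem : q.getLastD x ∈ x :: q := List.getLastD_mem_cons
  rw [endWeight_cons]
  exact (Nat.mul_le_mul_right _ (hA (hL.rel_head hmem))).trans (hG _ hmem)

lemma endWeight_sublistsLen_le (hA : Monotone A) (hG : ∀ x ∈ L, A x * D x ≤ G)
    (hL : L.Pairwise (· ≤ ·)) {s : ℕ} :
    ∀ k ∈ (L.sublistsLen (s + 1)).map (endWeight A D), k ≤ G := by
  refine List.forall_mem_map.2 fun q hq => ?_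
  obtain ⟨hsub, hlen⟩ := List.mem_sublistsLen.1 hq
  exact endWeight_le hA (fun x hx => hG x (hsub.subset hx)) (hL.sublist hsub)
    (List.ne_nil_of_length_eq_add_one hlen)

lemma endWeightSum_le (hA : Monotone A) (hG : ∀ x ∈ L, A x * D x ≤ G) (hL : L.Pairwise (· ≤ ·))
    (s : ℕ) : endWeightSum A D (s + 1) L ≤ L.length.choose (s + 1) * G := by
  simpa [endWeightSum] using List.sum_le_card_nsmul _ G (endWeight_sublistsLen_le hA hG hL)

lemma endWeightSum_one_add_one_ne (hG : ∀ x ∈ L, A x * D x ≤ G)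
    (hG' : ∀ x ∈ L, A x * D x + 1 ≠ G) : endWeightSum A D 1 L + 1 ≠ L.length * G := by
  have := sum_add_one_ne_length_mul (l := L.map fun x => A x * D x) (List.forall_mem_map.2 hG)
    (List.forall_mem_map.2 hG')
  rwa [endWeightSum_one, ← List.length_map (as := L) fun x => A x * D x]

lemma mul_le_endWeight (hA : Monotone A) (hD : Antitone D) {x y : ℕ}
    (hx : ∀ v ∈ L, x ≤ v) (hy : ∀ v ∈ L, v ≤ y) (hne : L ≠ []) :
    A x * D y ≤ endWeight A D L := by
  obtain ⟨v, q, rfl⟩ := List.exists_cons_of_ne_nil hne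
  rw [endWeight_cons]
  exact Nat.mul_le_mul (hA (hx v List.mem_cons_self)) (hD (hy _ List.getLastD_mem_cons))

lemma mul_lt_of_endWeightSum_lt (hA : Monotone A) (hD : Antitone D) {s x y : ℕ}
    (hx : ∀ v ∈ L, x ≤ v) (hy : ∀ v ∈ L, v ≤ y)
    (hlt : endWeightSum A D (s + 1) L < L.length.choose (s + 1) * G) : A x * D y < G := by
  by_contra! hge
  refine hlt.not_ge ?_
  rw [← List.length_sublistsLen, ← List.length_map (endWeight A D), ← smul_eq_mul]
  refine List.card_nsmul_le_sum _ _ (List.forall_mem_map.2 fun q hq => hge.trans ?_)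
  obtain ⟨hsub, hlen⟩ := List.mem_sublistsLen.1 hq
  exact mul_le_endWeight hA hD (fun v hv => hx v (hsub.subset hv))
    (fun v hv => hy v (hsub.subset hv)) (List.ne_nil_of_length_eq_add_one hlen)

lemma mem_of_sum_add_one_eq {l : List ℕ} (h : ∀ w ∈ l, w ≤ G) (hlen : 2 ≤ l.length)
    (hsum : l.sum + 1 = l.length * G) : G ∈ l := by
  by_contra hG
  have hsum' := List.sum_le_card_nsmul l (G - 1) fun w hw => Nat.le_sub_one_of_lt <|
    (h w hw).lt_of_ne fun hwG => hG (hwG ▸ hw)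
  have hlenG : l.length ≤ l.length * G := Nat.le_mul_of_pos_right _ <|
    Nat.pos_of_ne_zero fun hG => by simp [hG] at hsum
  rw [smul_eq_mul, Nat.mul_sub_one] at hsum'
  omega

lemma eq_and_mem_of_sum_add_sum_add_one_eq {l₁ l₂ : List ℕ} {a b : ℕ} (h₁ : ∀ w ∈ l₁, w ≤ G)
    (h₂ : ∀ w ∈ l₂, w ≤ G) (ha : a ∈ l₁) (haG : a < G) (hb : b ∈ l₂) (hlen : 2 ≤ l₁.length)
    (hsum : l₂.sum + l₁.sum + 1 = l₁.length * G + l₂.length * G) : b = G ∧ G ∈ l₁ := by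
  have hlt := sum_lt_length_mul h₁ ha haG
  have hle : l₂.sum ≤ l₂.length * G := List.sum_le_card_nsmul l₂ G h₂
  refine ⟨(h₂ b hb).eq_of_not_lt fun hbG => ?_, mem_of_sum_add_one_eq h₁ hlen (by omega)⟩
  have := sum_lt_length_mul h₂ hb hbG
  omega

lemma exists_endWeight_cons_eq {s x : ℕ} {q' : List ℕ}
    (h : q' ∈ L.sublistsLen (s + 1)) : ∃ v ∈ L, endWeight A D (x :: q') = A x * D v := by
  obtain ⟨hsub, hlen⟩ := List.mem_sublistsLen.1 h
  obtain ⟨c, q, rfl⟩ := List.exists_cons_of_length_eq_add_one hlen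
  refine ⟨q.getLastD c, hsub.subset List.getLastD_mem_cons, ?_⟩
  rw [endWeight_cons, List.getLastD_cons]

lemma take_concat_mem_sublistsLen {M : List ℕ} {k : ℕ} (hk : k ≤ M.length) (y : ℕ) :
    M.take k ++ [y] ∈ (M ++ [y]).sublistsLen (k + 1) :=
  List.mem_sublistsLen.2 ⟨(List.take_sublist k M).append_right [y], by simp [hk]⟩

lemma exists_eq_of_endWeightSum_add_one_eq (hA : Monotone A) (hD : Antitone D) {x x₂ y k : ℕ}
    {M : List ℕ} (hL : (x :: x₂ :: (M ++ [y])).Pairwise (· ≤ ·))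
    (hG : ∀ v ∈ x :: x₂ :: (M ++ [y]), A v * D v ≤ G) (hk : k ≤ M.length)
    (hgap : endWeightSum A D (k + 2) (x :: x₂ :: (M ++ [y])) + 1 =
      (M.length + 3).choose (k + 2) * G) :
    A x * D y < G ∧ A x₂ * D y = G ∧ ∃ v ∈ x₂ :: (M ++ [y]), A x * D v = G := by
  have hlen : (x₂ :: (M ++ [y])).length = M.length + 2 := by simp
  have hxy : A x * D y < G :=
    mul_lt_of_endWeightSum_lt hA hD (s := k + 1) (L := x :: x₂ :: (M ++ [y]))
      (fun v hv => hL.rel_head hv) (fun v hv => by simpa using hL.rel_getLast hv)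
      (by rw [List.length_cons, hlen]; exact Nat.lt_of_succ_le hgap.le)
  have hle := endWeight_sublistsLen_le hA hG hL (s := k + 1)
  rw [List.sublistsLen_succ_cons, List.map_append, List.map_map] at hle
  rw [endWeightSum_succ_cons, endWeightSum, Nat.choose_succ_succ', add_mul] at hgap
  set S₁ := ((x₂ :: (M ++ [y])).sublistsLen (k + 1)).map (endWeight A D ∘ List.cons x) with hS₁
  set S₂ := ((x₂ :: (M ++ [y])).sublistsLen (k + 2)).map (endWeight A D) with hS₂
  have hlen₁ : S₁.length = (M.length + 2).choose (k + 1) := by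
    rw [hS₁, List.length_map, List.length_sublistsLen, hlen]
  have hlen₂ : S₂.length = (M.length + 2).choose (k + 2) := by
    rw [hS₂, List.length_map, List.length_sublistsLen, hlen]
  obtain ⟨hsub, hlenq⟩ := List.mem_sublistsLen.1 (take_concat_mem_sublistsLen hk y)
  have hmem₁ : A x * D y ∈ S₁ := List.mem_map.2
    ⟨M.take k ++ [y], List.mem_sublistsLen.2 ⟨hsub.cons x₂, hlenq⟩, by simp [endWeight_cons]⟩
  have hmem₂ : A x₂ * D y ∈ S₂ := List.mem_map.2 ⟨x₂ :: (M.take k ++ [y]),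
    List.mem_sublistsLen.2 ⟨hsub.cons_cons x₂, by simp [hlenq]⟩, by simp [endWeight_cons]⟩
  have htwo : 2 ≤ S₁.length := hlen₁ ▸ le_trans (by omega)
    (le_choose_of_lt (n := M.length + 2) (k := k + 1) (by omega) (by omega))
  obtain ⟨hx₂y, hGmem⟩ := eq_and_mem_of_sum_add_sum_add_one_eq
    (fun w hw => hle w (List.mem_append_right _ hw)) (fun w hw => hle w (List.mem_append_left _ hw))
    hmem₁ hxy hmem₂ htwo (by rw [hlen₁, hlen₂]; exact hgap)
  obtain ⟨q, hq, hqG⟩ := List.mem_map.1 hGmem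
  obtain ⟨v, hv, hqv⟩ := exists_endWeight_cons_eq (A := A) (D := D) (x := x) hq
  exact ⟨hxy, hx₂y, v, hv, hqv.symm.trans hqG⟩

lemma endWeightSum_add_one_ne (hA : Monotone A) (hD : Antitone D) (hL : L.Pairwise (· ≤ ·))
    (hG : ∀ v ∈ L, A v * D v ≤ G) {s : ℕ} (hs : 2 ≤ s) (hsL : s < L.length) :
    endWeightSum A D s L + 1 ≠ L.length.choose s * G := by
  intro hgap
  obtain ⟨k, rfl⟩ := Nat.exists_eq_add_of_le' hs
  obtain ⟨x, x₂, L, rfl⟩ : ∃ x x₂ L', L = x :: x₂ :: L' := by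
    match L, hsL with
    | x :: x₂ :: L', _ => exact ⟨x, x₂, L', rfl⟩
  obtain ⟨M, y, rfl⟩ : ∃ M y, L = M ++ [y] :=
    ⟨_, _, (List.dropLast_append_getLast (by rintro rfl; simp at hsL)).symm⟩
  simp only [List.length_cons, List.length_append, List.length_nil] at hsL hgap
  obtain ⟨hxy, hx₂y, v, hv, hxv⟩ :=
    exists_eq_of_endWeightSum_add_one_eq hA hD hL hG (by omega) hgap
  have hx₂v : A x₂ * D v ≤ G :=
    (Nat.mul_le_mul_right _ (hA (hL.of_cons.rel_head hv))).trans (hG v (List.mem_cons_of_mem x hv))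
  have hswap : G * G ≤ G * (A x * D y) :=
    calc G * G = A x₂ * D y * (A x * D v) := by rw [hx₂y, hxv]
      _ = A x₂ * D v * (A x * D y) := by ring
      _ ≤ G * (A x * D y) := Nat.mul_le_mul_right _ hx₂v
  exact hxy.not_ge (Nat.le_of_mul_le_mul_left hswap (Nat.zero_lt_of_lt hxy))

end EndWeight

section Words

open List (replicate count)

lemma occ_eq_count_sublists' (p w : List Bool) : occ p w = w.sublists'.count p :=
  (List.sublists_perm_sublists' w).count_eq p

lemma occ_nil_right {p : List Bool} (hp : p ≠ []) : occ p [] = 0 := by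
  simp [occ, hp.symm]

lemma occ_cons_self (x : Bool) (p w : List Bool) :
    occ (x :: p) (x :: w) = occ (x :: p) w + occ p w := by
  simp only [occ_eq_count_sublists', List.sublists'_cons, List.count_append,
    List.count_map_of_injective _ _ List.cons_injective]

lemma occ_cons_of_ne {x c : Bool} (h : x ≠ c) (p w : List Bool) :
    occ (x :: p) (c :: w) = occ (x :: p) w := by
  simp only [occ_eq_count_sublists', List.sublists'_cons, List.count_append, Nat.add_eq_left,
    List.count_eq_zero, List.mem_map, not_exists, not_and]
  exact fun q _ hq => h (List.cons.inj hq).1.symm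

lemma occ_nil (w : List Bool) : occ [] w = 1 := by
  induction w with
  | nil => rfl
  | cons c w ih =>
    rw [occ_eq_count_sublists'] at ih ⊢
    simp [List.sublists'_cons, List.count_append, ih, List.count_eq_zero]

lemma occ_replicate (a : Bool) (t : ℕ) (w : List Bool) :
    occ (replicate t a) w = (count a w).choose t := by
  induction w generalizing t with
  | nil => cases t <;> simp [occ_nil, occ_nil_right, List.replicate_succ]
  | cons c w ih =>
    rcases t with _ | t
    · simp [occ_nil]
    by_cases h : a = c
    · subst h
      rw [List.replicate_succ, occ_cons_self, ← List.replicate_succ, ih, ih, List.count_cons_self,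
        Nat.choose_succ_succ', add_comm]
    · rw [List.replicate_succ, occ_cons_of_ne h, ← List.replicate_succ, ih,
        List.count_cons_of_ne (Ne.symm h)]

lemma count_add_count_not (a : Bool) (w : List Bool) : count a w + count (!a) w = w.length := by
  cases a <;> simp

/-- For each letter of `w` other than `a`, the number of letters `a` to its left. Together with
`count a w` this determines `w`. -/
def precedingCounts (a : Bool) : List Bool → List ℕ
  | [] => []
  | c :: w => if c = a then (precedingCounts a w).map (· + 1) else 0 :: precedingCounts a w

lemma precedingCounts_cons_self (a : Bool) (w : List Bool) :
    precedingCounts a (a :: w) = (precedingCounts a w).map (· + 1) := if_pos rfl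

lemma precedingCounts_not_cons (a : Bool) (w : List Bool) :
    precedingCounts a ((!a) :: w) = 0 :: precedingCounts a w := if_neg (by simp)

lemma length_precedingCounts (a : Bool) (w : List Bool) :
    (precedingCounts a w).length = count (!a) w := by
  induction w with
  | nil => rfl
  | cons c w ih => rcases Bool.eq_or_eq_not c a with rfl | rfl <;> simp [precedingCounts, ih]

lemma le_count_of_mem_precedingCounts {a : Bool} {w : List Bool} {x : ℕ}
    (hx : x ∈ precedingCounts a w) : x ≤ count a w := by
  induction w generalizing x with
  | nil => simp [precedingCounts] at hx
  | cons c w ih =>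
    rcases Bool.eq_or_eq_not c a with rfl | rfl
    · rw [precedingCounts_cons_self, List.mem_map] at hx
      obtain ⟨y, hy, rfl⟩ := hx
      simpa using ih hy
    · rw [precedingCounts_not_cons, List.mem_cons] at hx
      rcases hx with rfl | hx
      · exact Nat.zero_le _
      · simpa using ih hx

lemma pairwise_precedingCounts (a : Bool) (w : List Bool) :
    (precedingCounts a w).Pairwise (· ≤ ·) := by
  induction w with
  | nil => exact List.Pairwise.nil
  | cons c w ih =>
    rcases Bool.eq_or_eq_not c a with rfl | rfl
    · simpa [precedingCounts_cons_self, List.pairwise_map] using ih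
    · simpa [precedingCounts_not_cons] using ih

lemma precedingCounts_replicate_append (a : Bool) (x : ℕ) (w : List Bool) :
    precedingCounts a (replicate x a ++ w) = (precedingCounts a w).map (· + x) := by
  induction x with
  | zero => simp
  | succ x ih =>
    rw [List.replicate_succ, List.cons_append, precedingCounts_cons_self, ih, List.map_map]
    rfl

lemma precedingCounts_replicate_not_append (a : Bool) (y : ℕ) (w : List Bool) :
    precedingCounts a (replicate y (!a) ++ w) = replicate y 0 ++ precedingCounts a w := by
  induction y with
  | zero => rfl
  | succ y ih =>
    rw [List.replicate_succ, List.cons_append, precedingCounts_not_cons, ih]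
    rfl

lemma precedingCounts_replicate (a : Bool) (x : ℕ) : precedingCounts a (replicate x a) = [] := by
  simpa [precedingCounts] using precedingCounts_replicate_append a x []

lemma exists_precedingCounts_eq (a : Bool) {L : List ℕ} {z : ℕ} (hL : L.Pairwise (· ≤ ·))
    (hz : ∀ x ∈ L, x ≤ z) : ∃ w, count a w = z ∧ precedingCounts a w = L := by
  induction hn : L.length generalizing L z with
  | zero =>
    obtain rfl := List.eq_nil_of_length_eq_zero hn
    exact ⟨replicate z a, by simp, precedingCounts_replicate a z⟩
  | succ n ih =>
    obtain ⟨x, L, rfl⟩ := List.exists_cons_of_length_eq_add_one hn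
    have hx : ∀ v ∈ L, x ≤ v := fun v => List.rel_of_pairwise_cons hL
    have hL' : (L.map (· - x)).Pairwise (· ≤ ·) :=
      List.Pairwise.map _ (fun _ _ h => Nat.sub_le_sub_right h x) hL.of_cons
    obtain ⟨w, hw, hwL⟩ := ih (z := z - x) hL' (List.forall_mem_map.2 fun v hv =>
      Nat.sub_le_sub_right (hz v (List.mem_cons_of_mem x hv)) x) (by simpa using hn)
    refine ⟨replicate x a ++ (!a) :: w, ?_, ?_⟩
    · have := hz x List.mem_cons_self
      simp [hw]
      omega
    · rw [precedingCounts_replicate_append, precedingCounts_not_cons, hwL, List.map_cons,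
        List.map_map, zero_add]
      refine congrArg (x :: ·) (.trans (List.map_congr_left fun v hv => ?_) (List.map_id L))
      exact Nat.sub_add_cancel (hx v hv)

/-- The word consisting of `r` letters `a`, then `s` letters `!a`, then `t` letters `a`. -/
def threeBlocks (a : Bool) (r s t : ℕ) : List Bool :=
  replicate r a ++ (replicate s (!a) ++ replicate t a)

lemma length_threeBlocks (a : Bool) (r s t : ℕ) : (threeBlocks a r s t).length = r + s + t := by
  simp [threeBlocks, add_assoc]

lemma sublistsLen_map {α β : Type*} (f : α → β) (s : ℕ) (L : List α) :
    (L.map f).sublistsLen s = (L.sublistsLen s).map (List.map f) := by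
  induction L generalizing s with
  | nil => cases s <;> rfl
  | cons x L ih =>
    cases s <;> simp [List.sublistsLen_succ_cons, ih, Function.comp_def]

lemma endWeightSum_map_succ (A D : ℕ → ℕ) (s : ℕ) (L : List ℕ) :
    endWeightSum A D (s + 1) (L.map (· + 1)) =
      endWeightSum (fun x => A (x + 1)) (fun x => D (x + 1)) (s + 1) L := by
  rw [endWeightSum, endWeightSum, sublistsLen_map, List.map_map]
  refine congrArg List.sum (List.map_congr_left fun q hq => ?_)
  obtain ⟨c, q, rfl⟩ := List.exists_cons_of_length_eq_add_one (List.mem_sublistsLen.1 hq).2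
  simp only [Function.comp_apply, List.map_cons, endWeight_cons, List.getLastD_eq_getLast?,
    List.getLast?_map, Option.getD_map]

lemma endWeightSum_add_left (A A' D : ℕ → ℕ) (s : ℕ) (L : List ℕ) :
    endWeightSum (fun x => A x + A' x) D s L = endWeightSum A D s L + endWeightSum A' D s L := by
  rw [endWeightSum, endWeightSum, endWeightSum, ← List.sum_map_add]
  exact congrArg List.sum (List.map_congr_left fun q _ => add_mul _ _ _)

lemma occ_threeBlocks (a : Bool) {r s : ℕ} (hrs : s = 0 → r = 0) (t : ℕ) (w : List Bool) :
    occ (threeBlocks a r s t) w = endWeightSum (·.choose r)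
      (fun x => (count a w - x).choose t) s (precedingCounts a w) := by
  induction w generalizing r s with
  | nil =>
    rcases s with _ | s
    · obtain rfl := hrs rfl
      simp [threeBlocks, occ_replicate, endWeightSum, endWeight]
    · have hne : threeBlocks a r (s + 1) t ≠ [] := by simp [threeBlocks]
      simp [occ_nil_right hne, precedingCounts, endWeightSum]
  | cons c w ih =>
    rcases s with _ | s
    · obtain rfl := hrs rfl
      simp [threeBlocks, occ_replicate, endWeightSum, endWeight]
    rcases Bool.eq_or_eq_not c a with rfl | rfl
    · rw [precedingCounts_cons_self, endWeightSum_map_succ, List.count_cons_self]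
      simp only [Nat.add_sub_add_right]
      rcases r with _ | r
      · simp only [Nat.choose_zero_right]
        refine (occ_cons_of_ne (by simp) _ w).trans ((ih (r := 0) (s := s + 1) (by simp)).trans ?_)
        simp only [Nat.choose_zero_right]
      · simp only [Nat.choose_succ_succ', endWeightSum_add_left]
        rw [← ih (by simp), ← ih (by simp), add_comm (occ _ w)]
        exact occ_cons_self c _ w
    · rw [precedingCounts_not_cons, endWeightSum_succ_cons, List.count_cons_of_ne (by simp),
        ← ih (by simp)]
      rcases r with _ | r
      · refine (occ_cons_self (!a) _ w).trans (congrArg _ ?_)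
        refine (ih (r := 0) (s := s) (by simp)).trans (congrArg List.sum ?_)
        refine List.map_congr_left fun q _ => ?_
        simp only [Function.comp_apply, endWeight, List.getLastD_cons, Nat.choose_zero_right]
      · refine (occ_cons_of_ne (by simp) _ w).trans ?_
        simp [endWeight, Function.comp_def, threeBlocks, List.replicate_succ]

lemma precedingCounts_threeBlocks (a : Bool) (x y u : ℕ) :
    precedingCounts a (threeBlocks a x y u) = replicate y x := by
  simp [threeBlocks, precedingCounts_replicate_append, precedingCounts_replicate_not_append,
    precedingCounts_replicate]

lemma count_threeBlocks (a : Bool) (x y u : ℕ) : count a (threeBlocks a x y u) = x + u := by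
  simp [threeBlocks, List.count_replicate]

lemma occ_threeBlocks_threeBlocks (a : Bool) {r s t x y u : ℕ} (hs : s ≠ 0) :
    occ (threeBlocks a r s t) (threeBlocks a x y u) = chooseProd ![r, s, t] ![x, y, u] := by
  rw [occ_threeBlocks a (absurd · hs), precedingCounts_threeBlocks, count_threeBlocks]
  obtain ⟨s, rfl⟩ := Nat.exists_eq_succ_of_ne_zero hs
  have hq : ∀ q ∈ (replicate y x).sublistsLen (s + 1),
      endWeight (·.choose r) (fun v => (x + u - v).choose t) q = x.choose r * u.choose t :=
    fun q hq => by
    obtain ⟨hsub, hlen⟩ := List.mem_sublistsLen.1 hq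
    obtain ⟨n, -, rfl⟩ := List.sublist_replicate_iff.1 hsub
    obtain rfl := List.length_replicate.symm.trans hlen
    have hlast : (replicate s x).getLastD x = x := by
      rcases s with _ | s <;> simp [List.getLastD_eq_getLast?, List.getLast?_replicate]
    rw [List.replicate_succ, endWeight_cons, hlast, Nat.add_sub_cancel_left]
  rw [endWeightSum, List.map_congr_left hq]
  simp only [List.map_const', List.sum_replicate, List.length_sublistsLen, List.length_replicate,
    smul_eq_mul, chooseProd, Fin.prod_univ_three, Matrix.cons_val]
  ring

end Words

section MaxOcc

lemma B_ne_zero_iff {n k : ℕ} {p : List Bool} : B n p k ≠ 0 ↔ ∃ w, w.length = n ∧ occ p w = k := by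
  have : Finite {w : List Bool // w.length = n ∧ occ p w = k} :=
    (List.finite_length_eq Bool n).subset fun _ hw => hw.1
  rw [B, Nat.card_ne_zero, and_iff_left this, nonempty_subtype]

lemma bddAbove_occ (n : ℕ) (p : List Bool) :
    BddAbove {k | ∃ w : List Bool, w.length = n ∧ occ p w = k} := by
  refine ⟨2 ^ n, ?_⟩
  rintro _ ⟨w, rfl, rfl⟩
  exact List.count_le_length.trans_eq (List.length_sublists w)

lemma occ_le_maxOcc (p w : List Bool) : occ p w ≤ maxOcc w.length p :=
  le_csSup (bddAbove_occ _ p) ⟨w, rfl, rfl⟩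

lemma exists_occ_eq_maxOcc (n : ℕ) (p : List Bool) :
    ∃ w, w.length = n ∧ occ p w = maxOcc n p :=
  Nat.sSup_mem (s := {k | ∃ w : List Bool, w.length = n ∧ occ p w = k})
    ⟨_, List.replicate n true, List.length_replicate, rfl⟩ (bddAbove_occ n p)

lemma hasInternalZeroAt_of_occ_add_one_ne {n : ℕ} {p : List Bool} (hM : 2 ≤ maxOcc n p)
    (hgap : ∀ w, w.length = n → occ p w + 1 ≠ maxOcc n p) :
    B n p (maxOcc n p - 1) = 0 ∧ HasInternalZeroAt p n := by
  obtain ⟨w, hw, hwM⟩ := exists_occ_eq_maxOcc n p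
  have hB : B n p (maxOcc n p - 1) = 0 := by
    by_contra h
    obtain ⟨u, hu, hocc⟩ := B_ne_zero_iff.1 h
    exact hgap u hu (by omega)
  rcases p with _ | ⟨c, p⟩
  · rw [← hwM, occ_nil] at hM
    omega
  have hzero : occ (c :: p) (List.replicate n !c) = 0 := by
    refine List.count_eq_zero.2 fun h => ?_
    have := List.eq_of_mem_replicate ((List.mem_sublists.1 h).subset List.mem_cons_self)
    simp at this
  exact ⟨hB, 0, _, _, by omega, Nat.sub_one_lt_of_lt hM,
    B_ne_zero_iff.2 ⟨_, List.length_replicate, hzero⟩, hB, B_ne_zero_iff.2 ⟨w, hw, hwM⟩⟩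

lemma not_hasInternalZeroAt_of_forall_le {n : ℕ} {p : List Bool}
    (h : ∀ k ≤ maxOcc n p, B n p k ≠ 0) : ¬ HasInternalZeroAt p n := by
  rintro ⟨k₁, k₂, k₃, -, hk, -, hzero, hB⟩
  obtain ⟨w, rfl, rfl⟩ := B_ne_zero_iff.1 hB
  exact h k₂ (hk.le.trans (occ_le_maxOcc p w)) hzero

end MaxOcc

section Gap

open List (replicate count)

lemma maxOcc_replicate (n r : ℕ) (a : Bool) : maxOcc n (replicate r a) = n.choose r := by
  obtain ⟨w, hw, hwM⟩ := exists_occ_eq_maxOcc n (replicate r a)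
  have hle := occ_le_maxOcc (replicate r a) (replicate n a)
  rw [occ_replicate, List.count_replicate_self, List.length_replicate] at hle
  rw [occ_replicate] at hwM
  exact hle.antisymm' (hwM ▸ Nat.choose_le_choose r (hw ▸ List.count_le_length))

lemma occ_replicate_add_one_ne_maxOcc (a : Bool) {r : ℕ} (hr : 2 ≤ r) (w : List Bool)
    (hw : r < w.length) :
    occ (replicate r a) w + 1 ≠ maxOcc w.length (replicate r a) := by
  rw [maxOcc_replicate, occ_replicate]
  obtain ⟨r, rfl⟩ := Nat.exists_eq_add_of_le' hr
  rcases (List.count_le_length (a := a) (l := w)).eq_or_lt with h | h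
  · simp [h]
  obtain ⟨n, hn⟩ := Nat.exists_eq_add_of_lt (Nat.zero_lt_of_lt hw)
  have hmono : (count a w).choose (r + 2) ≤ n.choose (r + 1 + 1) :=
    Nat.choose_le_choose _ (by omega)
  have hlinear := le_choose_of_lt (n := n) (k := r + 1) (by omega) (by omega)
  rw [hn, zero_add, Nat.choose_succ_succ']
  omega

variable {a : Bool} {r s t : ℕ} {w : List Bool} {g : Fin 2 → ℕ}

lemma choose_mul_choose_le_of_isOptimal (hg : IsOptimal ![r, t] g) {x : ℕ} (hx : x ≤ ∑ k, g k) :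
    x.choose r * (∑ k, g k - x).choose t ≤ chooseProd ![r, t] g := by
  have := hg ![x, ∑ k, g k - x] ((Fin.sum_univ_two _).trans (Nat.add_sub_cancel' hx))
  simpa [chooseProd, Fin.prod_univ_two] using this

lemma antitone_choose_sub (z t : ℕ) : Antitone fun x : ℕ => (z - x).choose t :=
  fun _ _ h => Nat.choose_le_choose t (Nat.sub_le_sub_left h z)

lemma chooseProd_insert_middle (r s t m : ℕ) (g : Fin 2 → ℕ) :
    chooseProd ![r, s, t] ![g 0, m, g 1] = m.choose s * chooseProd ![r, t] g := by
  simp only [chooseProd, Fin.prod_univ_three, Fin.prod_univ_two, Matrix.cons_val]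
  ring

lemma weight_le_of_mem_precedingCounts (hg : IsOptimal ![r, t] g) (hz : ∑ k, g k = count a w) :
    ∀ x ∈ precedingCounts a w,
      x.choose r * (count a w - x).choose t ≤ chooseProd ![r, t] g := fun _ hx =>
  hz ▸ choose_mul_choose_le_of_isOptimal hg (hz ▸ le_count_of_mem_precedingCounts hx)

lemma occ_threeBlocks_le (hs : s ≠ 0) (hg : IsOptimal ![r, t] g) (hz : ∑ k, g k = count a w) :
    occ (threeBlocks a r s t) w ≤ chooseProd ![r, s, t] ![g 0, count (!a) w, g 1] := by
  obtain ⟨s, rfl⟩ := Nat.exists_eq_succ_of_ne_zero hs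
  rw [occ_threeBlocks a (absurd · hs), chooseProd_insert_middle, ← length_precedingCounts]
  exact endWeightSum_le (Nat.choose_mono r) (weight_le_of_mem_precedingCounts hg hz)
    (pairwise_precedingCounts a w) s

lemma sum_insert_count_not (hz : ∑ k, g k = count a w) :
    ∑ k, ![g 0, count (!a) w, g 1] k = w.length := by
  rw [← count_add_count_not a w, ← hz]
  simp only [Fin.sum_univ_three, Fin.sum_univ_two, Matrix.cons_val]
  ring

lemma exists_isOptimal_chooseProd_eq_maxOcc (a : Bool) (r : ℕ) (hs : s ≠ 0) (t n : ℕ) :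
    ∃ v, ∑ k, v k = n ∧ IsOptimal ![r, s, t] v ∧
      chooseProd ![r, s, t] v = maxOcc n (threeBlocks a r s t) := by
  obtain ⟨v, rfl, hv⟩ := exists_isOptimal ![r, s, t] n
  refine ⟨v, rfl, hv, le_antisymm ?_ ?_⟩
  · have hblock := occ_le_maxOcc (threeBlocks a r s t) (threeBlocks a (v 0) (v 1) (v 2))
    rw [occ_threeBlocks_threeBlocks a hs, length_threeBlocks, ← Fin.sum_univ_three] at hblock
    exact (congrArg _ (FinVec.etaExpand_eq v)).symm.trans_le hblock
  · obtain ⟨w, hw, hwM⟩ := exists_occ_eq_maxOcc (∑ k, v k) (threeBlocks a r s t)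
    obtain ⟨g, hz, hg⟩ := exists_isOptimal ![r, t] (count a w)
    exact hwM ▸ (occ_threeBlocks_le hs hg hz).trans (hv _ ((sum_insert_count_not hz).trans hw))

lemma two_le_maxOcc_threeBlocks (a : Bool) {n : ℕ} (hs : s ≠ 0) (h2 : ∃ k, 2 ≤ ![r, s, t] k)
    (hn : r + s + t + 2 ≤ n) : 2 ≤ maxOcc n (threeBlocks a r s t) := by
  obtain ⟨v, rfl, hv, hvM⟩ := exists_isOptimal_chooseProd_eq_maxOcc a r hs t n
  exact hvM ▸ hv.two_le_chooseProd h2 (by rwa [Fin.sum_univ_three])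

lemma occ_threeBlocks_one_add_one_ne (hg : IsOptimal ![r, t] g) (hz : ∑ k, g k = count a w)
    (h2 : 2 ≤ r ∨ 2 ≤ t) (hsum : r + t + 2 ≤ count a w) :
    occ (threeBlocks a r 1 t) w + 1 ≠ chooseProd ![r, 1, t] ![g 0, count (!a) w, g 1] := by
  rw [occ_threeBlocks a (absurd · one_ne_zero), chooseProd_insert_middle, Nat.choose_one_right,
    ← length_precedingCounts]
  refine endWeightSum_one_add_one_ne (weight_le_of_mem_precedingCounts hg hz) fun x hx => ?_
  have hx := le_count_of_mem_precedingCounts hx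
  have := hg.chooseProd_add_one_ne (v := ![x, count a w - x])
    (by simpa [Fin.exists_fin_two] using h2) (by rw [hz]; simpa [Fin.sum_univ_two] using hsum)
    (by rw [hz]; exact (Fin.sum_univ_two _).trans (Nat.add_sub_cancel' hx))
  simpa [chooseProd, Fin.prod_univ_two] using this

lemma IsOptimal.append_zero (hg : IsOptimal ![r, t] g) : IsOptimal ![r, t, 0] ![g 0, g 1, 0] := by
  intro u hu
  have := hg ![u 0, u 1 + u 2] (by simpa [Fin.sum_univ_three, Fin.sum_univ_two, add_assoc] using hu)
  simp only [chooseProd, Fin.prod_univ_three, Fin.prod_univ_two, Matrix.cons_val,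
    Nat.choose_zero_right, mul_one] at this ⊢
  exact (Nat.mul_le_mul_left _ (Nat.choose_le_choose t (Nat.le_add_right _ _))).trans this

lemma occ_threeBlocks_count_add_one_ne (hg : IsOptimal ![r, t] g) (hz : ∑ k, g k = count a w)
    (hs : count (!a) w ≠ 0) (h2 : 2 ≤ r ∨ 2 ≤ t) (hsum : r + t + 2 ≤ count a w) :
    occ (threeBlocks a r (count (!a) w) t) w + 1 ≠
      chooseProd ![r, count (!a) w, t] ![g 0, count (!a) w, g 1] := by
  rw [occ_threeBlocks a (absurd · hs), chooseProd_insert_middle, Nat.choose_self, one_mul,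
    ← length_precedingCounts, endWeightSum, List.sublistsLen_length, List.map_singleton,
    List.sum_singleton]
  rw [← length_precedingCounts] at hs
  obtain ⟨x, q, hL⟩ := List.exists_cons_of_length_pos (Nat.pos_of_ne_zero hs)
  have hmem : q.getLastD x ∈ precedingCounts a w := hL ▸ List.getLastD_mem_cons
  have hx : x ≤ q.getLastD x :=
    (hL ▸ pairwise_precedingCounts a w).rel_head List.getLastD_mem_cons
  have hy := le_count_of_mem_precedingCounts hmem
  rw [hL, endWeight_cons]
  have := hg.append_zero.chooseProd_add_one_ne
    (v := ![x, count a w - q.getLastD x, q.getLastD x - x])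
    (by simpa [Fin.exists_fin_succ] using h2)
    (by simp only [Fin.sum_univ_two, Fin.sum_univ_three, Matrix.cons_val] at hz ⊢; omega)
    (by simp only [Fin.sum_univ_two, Fin.sum_univ_three, Matrix.cons_val] at hz ⊢; omega)
  simpa [chooseProd, Fin.prod_univ_two, Fin.prod_univ_three] using this

lemma IsOptimal.add_two_le_of_middle_one {x m u : ℕ} (hv : IsOptimal ![r, 1, t] ![x, m, u])
    (hpos : 0 < chooseProd ![r, 1, t] ![x, m, u]) (h2 : 2 ≤ r ∨ 2 ≤ t) (hr : r ≠ 0)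
    (hsum : r + t + 4 ≤ x + m + u) : r + t + 2 ≤ x + u := by
  have hx : r * m ≤ x + 1 := by simpa using hv.mul_le_mul_succ hpos 0 1
  have hu : t * m ≤ u + 1 := by simpa using hv.mul_le_mul_succ hpos 2 1
  by_contra! hlt
  have hm : 3 ≤ m := by omega
  have := Nat.mul_le_mul_left r hm
  have := Nat.mul_le_mul_left t hm
  omega

lemma IsOptimal.two_le_or_two_le_of_middle_tight {x u : ℕ} (hv : IsOptimal ![r, s, t] ![x, s, u])
    (hpos : 0 < chooseProd ![r, s, t] ![x, s, u]) (hs : 2 ≤ s) (hsum : 3 ≤ x + u) :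
    2 ≤ r ∨ 2 ≤ t := by
  have hx : s * x ≤ r * (s + 1) := by simpa using hv.mul_le_mul_succ hpos 1 0
  have hu : s * u ≤ t * (s + 1) := by simpa using hv.mul_le_mul_succ hpos 1 2
  have hle {y c : ℕ} (hc : c < 2) (hy : s * y ≤ c * (s + 1)) : y ≤ 1 := by
    have := Nat.mul_le_mul_right (s + 1) (Nat.le_of_lt_succ hc)
    by_contra! hlt
    have := Nat.mul_le_mul_left s (Nat.succ_le_of_lt hlt)
    omega
  by_contra! hlt
  have := hle hlt.1 hx
  have := hle hlt.2 hu
  omega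

lemma occ_threeBlocks_add_one_ne_maxOcc (a : Bool) (hr : r ≠ 0) (hs : s ≠ 0)
    (h2 : ∃ k, 2 ≤ ![r, s, t] k) (w : List Bool) (hw : r + s + t + 3 ≤ w.length) :
    occ (threeBlocks a r s t) w + 1 ≠ maxOcc w.length (threeBlocks a r s t) := by
  intro hgap
  obtain ⟨v, hvsum, hv, hvM⟩ := exists_isOptimal_chooseProd_eq_maxOcc a r hs t w.length
  obtain ⟨g, hz, hg⟩ := exists_isOptimal ![r, t] (count a w)
  have hsum := (sum_insert_count_not hz).trans hvsum.symm
  have hle := occ_threeBlocks_le hs hg hz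
  rw [← hvM] at hgap
  have heq : chooseProd ![r, s, t] ![g 0, count (!a) w, g 1] = chooseProd ![r, s, t] v := by
    have := hv.chooseProd_add_one_ne h2
      (by rw [hvsum, Fin.sum_univ_three]; exact (Nat.le_succ _).trans hw) hsum
    have := hv _ hsum
    omega
  have hopt := hv.of_chooseProd_eq hsum heq
  have hpos : 0 < chooseProd ![r, s, t] ![g 0, count (!a) w, g 1] := by omega
  have hms : s ≤ count (!a) w := le_of_chooseProd_pos hpos 1
  have hcount := count_add_count_not a w
  have hz' : g 0 + g 1 = count a w := (Fin.sum_univ_two g).symm.trans hz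
  rw [← heq] at hgap
  rcases (Nat.one_le_iff_ne_zero.2 hs).eq_or_lt with rfl | hs'
  · have h2' : 2 ≤ r ∨ 2 ≤ t := by simpa [Fin.exists_fin_succ] using h2
    have := hopt.add_two_le_of_middle_one hpos h2' hr (by omega)
    exact occ_threeBlocks_one_add_one_ne hg hz h2' (by omega) hgap
  rcases hms.eq_or_lt with rfl | hlt
  · have h2' := hopt.two_le_or_two_le_of_middle_tight hpos hs' (by omega)
    exact occ_threeBlocks_count_add_one_ne hg hz hs h2' (by omega) hgap
  · rw [occ_threeBlocks a (absurd · hs), chooseProd_insert_middle, ← length_precedingCounts] at hgap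
    exact endWeightSum_add_one_ne (Nat.choose_mono r) (antitone_choose_sub _ t)
      (pairwise_precedingCounts a w) (weight_le_of_mem_precedingCounts hg hz) hs'
      (length_precedingCounts a w ▸ hlt) hgap

end Gap

section Alternating

open List (replicate count)
open scoped Pointwise

lemma exists_list_of_mem_nsmul_image {α : Type*} {f : α → ℕ} {S : Finset α} {m k : ℕ}
    (hk : k ∈ m • S.image f) :
    ∃ L : List α, L.length = m ∧ (∀ x ∈ L, x ∈ S) ∧ (L.map f).sum = k := by
  induction m generalizing k with
  | zero => exact ⟨[], rfl, by simp, by simpa [eq_comm] using hk⟩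
  | succ m ih =>
    rw [succ_nsmul', Finset.mem_add] at hk
    obtain ⟨_, hx, k, hk, rfl⟩ := hk
    obtain ⟨x, hxS, rfl⟩ := Finset.mem_image.1 hx
    obtain ⟨L, rfl, hLS, rfl⟩ := ih hk
    exact ⟨x :: L, rfl, List.forall_mem_cons.2 ⟨hxS, hLS⟩, rfl⟩

/-- The possible contributions of one letter `!a` to the number of occurrences of
`threeBlocks a r 1 t` in a word with `z` letters `a`. -/
def middleWeights (r t z : ℕ) : Finset ℕ :=
  (Finset.range (z + 1)).image fun x => x.choose r * (z - x).choose t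

lemma B_ne_zero_of_mem_nsmul_middleWeights (a : Bool) {r t z m k : ℕ}
    (hk : k ∈ m • middleWeights r t z) : B (z + m) (threeBlocks a r 1 t) k ≠ 0 := by
  obtain ⟨L, rfl, hLz, rfl⟩ := exists_list_of_mem_nsmul_image hk
  have hperm := L.perm_insertionSort (· ≤ ·)
  obtain ⟨w, rfl, hwL⟩ := exists_precedingCounts_eq a (L.pairwise_insertionSort (· ≤ ·))
    fun x hx => Finset.mem_range_succ_iff.1 (hLz x (hperm.subset hx))
  refine B_ne_zero_iff.2 ⟨w, ?_, ?_⟩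
  · rw [← count_add_count_not a w, ← length_precedingCounts, hwL, hperm.length_eq]
  · rw [occ_threeBlocks a (absurd · one_ne_zero), endWeightSum_one, hwL]
    exact (hperm.map _).sum_eq

lemma mem_nsmul_range_of_le {z m k : ℕ} (hk : k ≤ m * z) : k ∈ m • Finset.range (z + 1) := by
  induction m generalizing k with
  | zero => simpa using hk
  | succ m ih =>
    rw [succ_nsmul', Finset.mem_add]
    rw [Nat.succ_mul] at hk
    exact ⟨min k z, by simp, k - min k z, ih (by omega), by omega⟩

lemma not_hasInternalZeroAt_nil (n : ℕ) : ¬ HasInternalZeroAt [] n := by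
  rintro ⟨k₁, k₂, k₃, h₁₂, h₂₃, h₁, -, h₃⟩
  obtain ⟨w₁, -, rfl⟩ := B_ne_zero_iff.1 h₁
  obtain ⟨w₃, -, rfl⟩ := B_ne_zero_iff.1 h₃
  rw [occ_nil] at *
  omega

lemma not_hasInternalZeroAt_replicate_one (a : Bool) (n : ℕ) :
    ¬ HasInternalZeroAt (replicate 1 a) n := by
  refine not_hasInternalZeroAt_of_forall_le fun k hk => ?_
  rw [maxOcc_replicate, Nat.choose_one_right] at hk
  exact B_ne_zero_iff.2 ⟨replicate k a ++ replicate (n - k) (!a), by simp [hk],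
    (occ_replicate a 1 _).trans (by simp [List.count_replicate])⟩

lemma not_hasInternalZeroAt_threeBlocks_one_one_zero (a : Bool) (n : ℕ) :
    ¬ HasInternalZeroAt (threeBlocks a 1 1 0) n := by
  refine not_hasInternalZeroAt_of_forall_le fun k hk => ?_
  obtain ⟨v, rfl, -, hvM⟩ := exists_isOptimal_chooseProd_eq_maxOcc a 1 one_ne_zero 0 n
  simp only [← hvM, chooseProd, Fin.prod_univ_three, Matrix.cons_val, Nat.choose_one_right,
    Nat.choose_zero_right, mul_one] at hk
  have hmem : k ∈ v 1 • middleWeights 1 0 (v 0 + v 2) := by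
    simpa [middleWeights] using mem_nsmul_range_of_le (by nlinarith)
  have hsum : ∑ i, v i = v 0 + v 2 + v 1 := by rw [Fin.sum_univ_three, add_right_comm]
  exact hsum ▸ B_ne_zero_of_mem_nsmul_middleWeights a hmem

lemma mem_middleWeights_one_one {z x y : ℕ} (h : x + y = z) : x * y ∈ middleWeights 1 1 z := by
  subst h
  exact Finset.mem_image.2 ⟨x, by simp, by simp⟩

-- A letter at distance `d` from the middle of the `2 * h` letters `a` loses `d ^ 2` of the maximal
-- contribution `h ^ 2`, so four letters produce any loss up to `h ^ 2` by Lagrange's theorem.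
lemma exists_mem_nsmul_middleWeights {h m N : ℕ} (hN : N ≤ (m + 1) * h ^ 2) :
    ∃ k ∈ (m + 4) • middleWeights 1 1 (2 * h), k + N = (m + 4) * h ^ 2 := by
  induction m generalizing N with
  | zero =>
    have hweight {d : ℕ} (hd : d ^ 2 ≤ h ^ 2) :
        ∃ k ∈ middleWeights 1 1 (2 * h), k + d ^ 2 = h ^ 2 := by
      obtain ⟨e, rfl⟩ := Nat.exists_eq_add_of_le ((Nat.pow_le_pow_iff_left two_ne_zero).1 hd)
      exact ⟨e * (e + 2 * d), mem_middleWeights_one_one (by ring), by ring⟩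
    obtain ⟨d₁, d₂, d₃, d₄, rfl⟩ := Nat.sum_four_squares N
    obtain ⟨k₁, hk₁, h₁⟩ := hweight (d := d₁) (by omega)
    obtain ⟨k₂, hk₂, h₂⟩ := hweight (d := d₂) (by omega)
    obtain ⟨k₃, hk₃, h₃⟩ := hweight (d := d₃) (by omega)
    obtain ⟨k₄, hk₄, h₄⟩ := hweight (d := d₄) (by omega)
    refine ⟨k₁ + k₂ + k₃ + k₄, ?_, by omega⟩
    have hfour (S : Finset ℕ) : (0 + 4) • S = S + S + S + S := by
      rw [zero_add, succ_nsmul, succ_nsmul, two_nsmul]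
    rw [hfour]
    exact Finset.add_mem_add (Finset.add_mem_add (Finset.add_mem_add hk₁ hk₂) hk₃) hk₄
  | succ m ih =>
    have hmax : h * h ∈ middleWeights 1 1 (2 * h) := mem_middleWeights_one_one (two_mul h).symm
    have hzero : 0 * (2 * h) ∈ middleWeights 1 1 (2 * h) :=
      mem_middleWeights_one_one (zero_add _)
    rw [Nat.add_right_comm, succ_nsmul']
    rcases le_total N ((m + 1) * h ^ 2) with hle | hge
    · obtain ⟨k, hk, hkN⟩ := ih hle
      exact ⟨h * h + k, Finset.add_mem_add hmax hk, by linarith⟩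
    · obtain ⟨N, rfl⟩ := Nat.exists_eq_add_of_le (show h ^ 2 ≤ N by nlinarith)
      obtain ⟨k, hk, hkN⟩ := ih (N := N) (by linarith)
      exact ⟨0 * (2 * h) + k, Finset.add_mem_add hzero hk, by linarith⟩

lemma B_succ_ne_zero {a : Bool} {n k r s t : ℕ} (h : B n (threeBlocks a (r + 1) s t) k ≠ 0) :
    B (n + 1) (threeBlocks a (r + 1) s t) k ≠ 0 := by
  obtain ⟨w, rfl, rfl⟩ := B_ne_zero_iff.1 h
  exact B_ne_zero_iff.2 ⟨(!a) :: w, rfl, occ_cons_of_ne (by simp) _ w⟩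

lemma mem_nsmul_middleWeights_of_le_four :
    ∀ h ≤ 4, ∀ y ≤ 4, 7 ≤ 2 * h + y ∧ h ≤ y + 1 ∧ y ≤ h + 1 →
      ∀ k ≤ y * h ^ 2, ∃ z ≤ 2 * h + y, k ∈ (2 * h + y - z) • middleWeights 1 1 z := by
  decide +kernel

lemma exists_balanced_pred {h y : ℕ} (hn : 12 ≤ 2 * h + y) (hhy : h ≤ y + 1) (hyh : y ≤ h + 1) :
    ∃ h' y', 2 * h' + y' + 1 = 2 * h + y ∧ h' ≤ y' + 1 ∧ y' ≤ h' + 1 ∧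
      3 * h ^ 2 ≤ y' * h' ^ 2 := by
  obtain rfl | rfl | rfl : y = h ∨ y = h + 1 ∨ h = y + 1 := by omega
  · obtain ⟨c, rfl⟩ := Nat.exists_eq_add_of_le' (show 4 ≤ y by omega)
    exact ⟨c + 4, c + 3, by omega, by omega, by omega, Nat.mul_le_mul_right _ (by omega)⟩
  · exact ⟨h, h, by omega, by omega, by omega, Nat.mul_le_mul_right _ (by omega)⟩
  · obtain ⟨c, rfl⟩ := Nat.exists_eq_add_of_le' (show 4 ≤ y by omega)
    exact ⟨c + 4, c + 5, by omega, by omega, by omega, by nlinarith⟩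

lemma B_threeBlocks_one_one_one_ne_zero (a : Bool) {h y k : ℕ} (hn : 7 ≤ 2 * h + y)
    (hhy : h ≤ y + 1) (hyh : y ≤ h + 1) (hk : k ≤ y * h ^ 2) :
    B (2 * h + y) (threeBlocks a 1 1 1) k ≠ 0 := by
  induction hN : 2 * h + y generalizing h y with
  | zero => omega
  | succ n ih =>
    rcases lt_or_ge n 11 with hsmall | hlarge
    · obtain ⟨z, hz, hkz⟩ := mem_nsmul_middleWeights_of_le_four h (by omega) y (by omega)
        ⟨hn, hhy, hyh⟩ k hk
      have := B_ne_zero_of_mem_nsmul_middleWeights a hkz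
      rwa [Nat.add_sub_cancel' hz, hN] at this
    rcases le_total k (3 * h ^ 2) with hk' | hk'
    · obtain ⟨h', y', hN', hhy', hyh', hmax⟩ := exists_balanced_pred (by omega) hhy hyh
      exact B_succ_ne_zero (ih (by omega) hhy' hyh' (hk'.trans hmax) (by omega))
    · obtain ⟨m, rfl⟩ := Nat.exists_eq_add_of_le' (show 4 ≤ y by omega)
      obtain ⟨k', hmem, hk''⟩ := exists_mem_nsmul_middleWeights (h := h) (m := m)
        (N := (m + 4) * h ^ 2 - k) (by rw [Nat.sub_le_iff_le_add]; linarith)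
      obtain rfl : k' = k := by omega
      exact hN ▸ B_ne_zero_of_mem_nsmul_middleWeights a hmem

lemma not_hasInternalZeroAt_threeBlocks_one_one_one (a : Bool) {n : ℕ} (hn : 7 ≤ n) :
    ¬ HasInternalZeroAt (threeBlocks a 1 1 1) n := by
  refine not_hasInternalZeroAt_of_forall_le fun k hk => ?_
  obtain ⟨v, rfl, hv, hvM⟩ := exists_isOptimal_chooseProd_eq_maxOcc a 1 one_ne_zero 1 n
  have hsum : ∑ i, ![1, 1, 1] i ≤ ∑ i, v i := by
    rw [show ∑ i, ![1, 1, 1] i = 3 from rfl]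
    omega
  have hpos : 0 < chooseProd ![1, 1, 1] v :=
    (Nat.choose_pos (Nat.le_add_right _ _)).trans_le (hv.choose_le hsum 0)
  have hbal (i j : Fin 3) : v j ≤ v i + 1 := by
    have := hv.mul_le_mul_succ hpos i j
    have hone : ∀ i, ![1, 1, 1] i = 1 := by decide
    simpa [hone] using this
  simp only [← hvM, chooseProd, Fin.prod_univ_three, Matrix.cons_val, Nat.choose_one_right] at hk
  rw [Fin.sum_univ_three] at hn ⊢
  obtain ⟨h, y, hsum, hhy, hyh, hprod⟩ : ∃ h y, v 0 + v 1 + v 2 = 2 * h + y ∧ h ≤ y + 1 ∧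
      y ≤ h + 1 ∧ v 0 * v 1 * v 2 = y * h ^ 2 := by
    have := And.intro (hbal 0 1) (hbal 1 0)
    have := And.intro (hbal 0 2) (hbal 2 0)
    have := And.intro (hbal 1 2) (hbal 2 1)
    obtain heq | heq | heq : v 0 = v 1 ∨ v 0 = v 2 ∨ v 1 = v 2 := by omega
    · exact ⟨v 1, v 2, by omega, by omega, by omega, by rw [heq]; ring⟩
    · exact ⟨v 2, v 1, by omega, by omega, by omega, by rw [heq]; ring⟩
    · exact ⟨v 2, v 0, by omega, by omega, by omega, by rw [heq]; ring⟩
  exact hsum ▸ B_threeBlocks_one_one_one_ne_zero a (hsum ▸ hn) hhy hyh (hprod ▸ hk)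

end Alternating

section Runs

open List (replicate)

lemma runs_replicate_append (a : Bool) {r : ℕ} (hr : r ≠ 0) {q : List Bool}
    (hq : ∀ y ∈ q.head?, y = !a) : runs (replicate r a ++ q) = replicate r a :: runs q := by
  rw [runs, List.splitBy_append, List.splitBy_of_isChain]
  · rfl
  · simpa using hr
  · exact List.isChain_replicate_of_rel _ (beq_self_eq_true a)
  · intro x hx y hy
    rw [hq y hy, List.eq_of_mem_replicate (List.mem_of_getLast? hx)]
    simp

lemma exists_eq_replicate_append (a : Bool) (q : List Bool) :
    ∃ r q', q = replicate r a ++ q' ∧ ∀ y ∈ q'.head?, y = !a := by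
  induction q with
  | nil => exact ⟨0, [], rfl, by simp⟩
  | cons c q ih =>
    rcases Bool.eq_or_eq_not c a with rfl | rfl
    · obtain ⟨r, q', rfl, hq'⟩ := ih
      exact ⟨r + 1, q', rfl, hq'⟩
    · exact ⟨0, (!a) :: q, rfl, by simp⟩

lemma numRuns_replicate_append (a : Bool) {r : ℕ} (hr : r ≠ 0) {q : List Bool}
    (hq : ∀ y ∈ q.head?, y = !a) : numRuns (replicate r a ++ q) = numRuns q + 1 :=
  congrArg List.length (runs_replicate_append a hr hq)

lemma exists_eq_replicate_append_of_head? {a : Bool} {q : List Bool}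
    (hq : ∀ y ∈ q.head?, y = a) : ∃ r q', q = replicate r a ++ q' ∧
      (∀ y ∈ q'.head?, y = !a) ∧ (r = 0 → q' = []) ∧ numRuns q' = numRuns q - 1 := by
  obtain ⟨r, q', rfl, hq'⟩ := exists_eq_replicate_append a q
  rcases eq_or_ne r 0 with rfl | hr
  · obtain rfl : q' = [] := by
      rcases q' with _ | ⟨c, q'⟩
      · rfl
      · simp_all
    exact ⟨0, [], rfl, hq', fun _ => rfl, rfl⟩
  · exact ⟨r, q', rfl, hq', fun h => absurd h hr, by rw [numRuns_replicate_append a hr hq']; rfl⟩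

lemma exists_eq_threeBlocks_of_numRuns_le_three {p : List Bool} (hp : numRuns p ≤ 3) :
    ∃ a r s t, p = threeBlocks a r s t ∧ (r = 0 → s = 0) ∧ (s = 0 → t = 0) := by
  obtain ⟨a, ha⟩ : ∃ a, ∀ y ∈ p.head?, y = a := by cases p <;> simp
  obtain ⟨r, q₁, rfl, hq₁, hr, hn₁⟩ := exists_eq_replicate_append_of_head? ha
  obtain ⟨s, q₂, rfl, hq₂, hs, hn₂⟩ := exists_eq_replicate_append_of_head? hq₁
  rw [Bool.not_not] at hq₂
  obtain ⟨t, q₃, rfl, -, -, hn₃⟩ := exists_eq_replicate_append_of_head? hq₂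
  have hq₃ : numRuns q₃ = 0 := by omega
  obtain rfl : q₃ = [] := by simpa [numRuns, runs] using hq₃
  refine ⟨a, r, s, t, by rw [threeBlocks, List.append_nil], fun h => ?_, fun h => ?_⟩
  · simpa using (List.append_eq_nil_iff.1 (hr h)).1
  · simpa using hs h

lemma forall_length_runs_replicate_append {a : Bool} {r : ℕ} {q : List Bool}
    (hq : ∀ y ∈ q.head?, y = !a) : (∀ x ∈ runs (replicate r a ++ q), x.length = 1) ↔
      r ≤ 1 ∧ ∀ x ∈ runs q, x.length = 1 := by
  rcases eq_or_ne r 0 with rfl | hr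
  · simp
  · rw [runs_replicate_append a hr hq, List.forall_mem_cons, List.length_replicate]
    exact and_congr_left' (by omega)

lemma forall_length_runs_threeBlocks {a : Bool} {r s t : ℕ} (hst : s = 0 → t = 0) :
    (∀ x ∈ runs (threeBlocks a r s t), x.length = 1) ↔ r ≤ 1 ∧ s ≤ 1 ∧ t ≤ 1 := by
  have hhead (b : Bool) (k : ℕ) : ∀ y ∈ (replicate k b).head?, y = b :=
    fun y hy => List.eq_of_mem_replicate (List.mem_of_mem_head? hy)
  rw [threeBlocks, forall_length_runs_replicate_append, forall_length_runs_replicate_append,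
    ← List.append_nil (replicate t a), forall_length_runs_replicate_append (by simp)]
  · simp [runs]
  · rw [Bool.not_not]
    exact hhead a t
  · rcases eq_or_ne s 0 with rfl | hs
    · simp [hst rfl]
    · simp [List.head?_append, List.head?_replicate, hs]

end Runs

section ThreeBlocks

variable {a : Bool} {r s t n : ℕ}

lemma threeBlocks_zero_zero (a : Bool) (r : ℕ) : threeBlocks a r 0 0 = List.replicate r a := by
  simp [threeBlocks]

lemma not_hasInternalZeroAt_threeBlocks_of_le_one (hrs : r = 0 → s = 0) (hst : s = 0 → t = 0)
    (hle : r ≤ 1 ∧ s ≤ 1 ∧ t ≤ 1) (hn : 7 ≤ n) :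
    ¬ HasInternalZeroAt (threeBlocks a r s t) n := by
  obtain ⟨hr, hs, ht⟩ := hle
  interval_cases r <;> interval_cases s <;> interval_cases t <;> try omega
  · exact not_hasInternalZeroAt_nil n
  · exact threeBlocks_zero_zero a 1 ▸ not_hasInternalZeroAt_replicate_one a n
  · exact not_hasInternalZeroAt_threeBlocks_one_one_zero a n
  · exact not_hasInternalZeroAt_threeBlocks_one_one_one a hn

lemma hasInternalZeroAt_threeBlocks (hrs : r = 0 → s = 0) (hst : s = 0 → t = 0)
    (h2 : ¬ (r ≤ 1 ∧ s ≤ 1 ∧ t ≤ 1)) (hn : r + s + t + 3 ≤ n) :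
    B n (threeBlocks a r s t) (maxOcc n (threeBlocks a r s t) - 1) = 0 ∧
      HasInternalZeroAt (threeBlocks a r s t) n := by
  rcases eq_or_ne s 0 with rfl | hs
  · obtain rfl := hst rfl
    have hr : 2 ≤ r := by omega
    rw [threeBlocks_zero_zero]
    refine hasInternalZeroAt_of_occ_add_one_ne ?_ ?_
    · rw [maxOcc_replicate]
      exact (by omega : 2 ≤ n).trans (le_choose_of_lt (by omega) (by omega))
    · rintro w rfl
      exact occ_replicate_add_one_ne_maxOcc a hr w (by omega)
  · have h2' : ∃ k, 2 ≤ ![r, s, t] k := by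
      by_contra! hlt
      exact h2 ⟨Nat.le_of_lt_succ (hlt 0), Nat.le_of_lt_succ (hlt 1), Nat.le_of_lt_succ (hlt 2)⟩
    refine hasInternalZeroAt_of_occ_add_one_ne
      (two_le_maxOcc_threeBlocks a hs h2' ((Nat.le_succ _).trans hn)) ?_
    rintro w rfl
    exact occ_threeBlocks_add_one_ne_maxOcc a (fun hr => hs (hrs hr)) hs h2' w hn

end ThreeBlocks

theorem at_most_three_runs_internalZeros (p : List Bool) (l : ℕ) (hl : p.length = l)
    (hr : numRuns p ≤ 3) :
    ((∀ q ∈ runs p, q.length = 1) → ∀ n, 7 ≤ n → ¬ HasInternalZeroAt p n) ∧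
    ((¬ ∀ q ∈ runs p, q.length = 1) → ∀ n, l + 3 ≤ n →
      B n p (maxOcc n p - 1) = 0 ∧ HasInternalZeroAt p n) := by
  obtain ⟨a, r, s, t, rfl, hrs, hst⟩ := exists_eq_threeBlocks_of_numRuns_le_three hr
  rw [forall_length_runs_threeBlocks hst, ← hl, length_threeBlocks]
  exact ⟨fun h n hn => not_hasInternalZeroAt_threeBlocks_of_le_one hrs hst h hn,
    fun h n hn => hasInternalZeroAt_threeBlocks hrs hst h hn⟩
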